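/- Monotonicity of selective risk: Let (Ω, 𝓕, P) be a probability space, conf : Ω → ℝ a measurable confidence score, and L : Ω → ℝ an integrable nonnegative loss. Define the coverage function φ(t) = P(conf ≥ t) and, for any threshold t with φ(t) > 0, the selective risk R(t) = E[L | conf ≥ t]. Assume conf is rank-calibrated with respect to L, i.e., for all t₁ < t₂ with φ(t₁) > φ(t₂) > 0 one has E[L | t₁ ≤ conf < t₂] ≥ E[L | conf ≥ t₂]. Then for any thresholds τ₁ < τ₂ with φ(τ₂) > 0, it holds that R(τ₂) ≤ R(τ₁). -/

import Mathlib

open MeasureTheory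

/-- **Monotonicity of selective risk.**
On a probability space, with a measurable confidence score `conf` and an
integrable nonnegative loss `L`, define the coverage `φ t = P(conf ≥ t)` and,
whenever `φ t > 0`, the selective risk `R t = E[L | conf ≥ t]`
(conditional expectation written as the ratio of the restricted integral to
the coverage).  If `conf` is rank-calibrated with respect to `L`, i.e. for all
`t₁ < t₂` with `φ t₁ > φ t₂ > 0` the band-conditional expected loss
`E[L | t₁ ≤ conf < t₂]` is at least `E[L | conf ≥ t₂]`, then for any
thresholds `τ₁ < τ₂` with `φ τ₂ > 0` we have `R τ₂ ≤ R τ₁`. -/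
theorem selective_risk_monotone
    {Ω : Type*} [MeasurableSpace Ω] (μ : Measure Ω) [IsProbabilityMeasure μ]
    (conf L : Ω → ℝ) (hconf : Measurable conf)
    (hL : Integrable L μ) (hLnonneg : ∀ ω, 0 ≤ L ω)
    (φ : ℝ → ℝ) (hφ : ∀ t, φ t = (μ {ω | t ≤ conf ω}).toReal)
    (R : ℝ → ℝ)
    (hR : ∀ t, R t = (∫ ω in {ω | t ≤ conf ω}, L ω ∂μ) / φ t)
    (hrank : ∀ t₁ t₂ : ℝ, t₁ < t₂ → φ t₂ < φ t₁ → 0 < φ t₂ →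
      (∫ ω in {ω | t₂ ≤ conf ω}, L ω ∂μ) / φ t₂ ≤
        (∫ ω in {ω | t₁ ≤ conf ω ∧ conf ω < t₂}, L ω ∂μ) / (φ t₁ - φ t₂))
    (τ₁ τ₂ : ℝ) (hτ : τ₁ < τ₂) (hcov : 0 < φ τ₂) :
    R τ₂ ≤ R τ₁ := by
  have hm : MeasurableSet {ω | τ₁ ≤ conf ω ∧ conf ω < τ₂} :=
    (measurableSet_le measurable_const hconf).inter (measurableSet_lt hconf measurable_const)
  have hm2 : MeasurableSet {ω | τ₂ ≤ conf ω} := measurableSet_le measurable_const hconf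
  have hunion : {ω | τ₁ ≤ conf ω} =
      {ω | τ₁ ≤ conf ω ∧ conf ω < τ₂} ∪ {ω | τ₂ ≤ conf ω} := by
    ext ω
    simp only [Set.mem_setOf_eq, Set.mem_union]
    constructor
    · intro h
      rcases lt_or_ge (conf ω) τ₂ with h2 | h2
      · exact Or.inl ⟨h, h2⟩
      · exact Or.inr h2
    · rintro (h | h)
      · exact h.1
      · exact hτ.le.trans h
  have hdisj : Disjoint {ω | τ₁ ≤ conf ω ∧ conf ω < τ₂} {ω | τ₂ ≤ conf ω} := by
    rw [Set.disjoint_left]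
    intro ω h h2
    exact absurd h.2 (not_lt.mpr h2)
  have hI : ∫ ω in {ω | τ₁ ≤ conf ω}, L ω ∂μ =
      (∫ ω in {ω | τ₁ ≤ conf ω ∧ conf ω < τ₂}, L ω ∂μ) + ∫ ω in {ω | τ₂ ≤ conf ω}, L ω ∂μ := by
    rw [hunion]
    exact setIntegral_union hdisj hm2 hL.integrableOn hL.integrableOn
  have hB : 0 ≤ ∫ ω in {ω | τ₁ ≤ conf ω ∧ conf ω < τ₂}, L ω ∂μ :=
    setIntegral_nonneg hm (fun ω _ => hLnonneg ω)
  have hle : φ τ₂ ≤ φ τ₁ := by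
    rw [hφ, hφ]
    exact ENNReal.toReal_mono (measure_ne_top _ _)
      (measure_mono (fun ω (h : τ₂ ≤ conf ω) => hτ.le.trans h))
  rw [hR, hR, hI]
  rcases hle.eq_or_lt with h | h
  · rw [← h]
    gcongr
    linarith
  · have hr := hrank τ₁ τ₂ hτ h hcov
    rw [div_le_div_iff₀ hcov (by linarith)] at hr
    rw [div_le_div_iff₀ hcov (by linarith)]
    linarith
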